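/- arXiv:2604.09950 — 4 statements merged into one kernel-verified Lean document; each statement's English description precedes it below -/
import Mathlib

section
/- Let C and D be bivariate copulas with derivative families (h_v)_{v∈[0,1]} and (g_w)_{w∈[0,1]}, respectively. Then ∫₀¹ min(h_v(t), g_w(t)) dt = min(v,w) for all (v,w) ∈ [0,1]² if and only if C = D (i.e. C(v,u) = D(v,u) for all (v,u) ∈ [0,1]²). In other words, the upper product C ∨ D equals the comonotonicity copula M(v,w) = min(v,w) exactly when C = D. -/
open MeasureTheory Set

noncomputable section

/-- A bivariate copula: a function `[0,1]² → [0,1]` (encoded on `ℝ × ℝ`, with all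
conditions imposed on `[0,1]²`) with the copula boundary conditions and the
2-increasing property. -/
def IsCopula (C : ℝ → ℝ → ℝ) : Prop :=
  (∀ v ∈ Icc (0:ℝ) 1, ∀ u ∈ Icc (0:ℝ) 1, C v u ∈ Icc (0:ℝ) 1) ∧
  (∀ v ∈ Icc (0:ℝ) 1, C v 0 = 0) ∧
  (∀ u ∈ Icc (0:ℝ) 1, C 0 u = 0) ∧
  (∀ v ∈ Icc (0:ℝ) 1, C v 1 = v) ∧
  (∀ u ∈ Icc (0:ℝ) 1, C 1 u = u) ∧
  (∀ v₁ v₂ u₁ u₂ : ℝ, 0 ≤ v₁ → v₁ ≤ v₂ → v₂ ≤ 1 → 0 ≤ u₁ → u₁ ≤ u₂ → u₂ ≤ 1 →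
    0 ≤ C v₂ u₂ - C v₁ u₂ - C v₂ u₁ + C v₁ u₁)

/-- A derivative family `(h_v)_{v ∈ [0,1]}` for a copula `C`:
each `h_v : [0,1] → [0,1]` is Lebesgue measurable, `C(v,u) = ∫₀ᵘ h_v(t) dt`,
`v ↦ h_v(t)` is increasing, and `∫₀¹ h_v(t) dt = v`. -/
def IsDerivFamily (C : ℝ → ℝ → ℝ) (h : ℝ → ℝ → ℝ) : Prop :=
  (∀ v ∈ Icc (0:ℝ) 1, Measurable (h v)) ∧
  (∀ v ∈ Icc (0:ℝ) 1, ∀ t ∈ Icc (0:ℝ) 1, h v t ∈ Icc (0:ℝ) 1) ∧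
  (∀ v ∈ Icc (0:ℝ) 1, ∀ u ∈ Icc (0:ℝ) 1, C v u = ∫ t in (0:ℝ)..u, h v t) ∧
  (∀ t ∈ Icc (0:ℝ) 1, MonotoneOn (fun v => h v t) (Icc (0:ℝ) 1)) ∧
  (∀ v ∈ Icc (0:ℝ) 1, (∫ t in (0:ℝ)..1, h v t) = v)

/-!
If `∫ f = ∫ g`, then `∫ min f g` attains this common value only when `f = g` almost everywhere. Thus
the diagonal `v = w` of `C ∨ D = M` already forces `h_v = g_v` almost everywhere for each `v`.
Conversely, if the families agree almost everywhere then `min (h_v, g_w) = min (h_v, h_w)`, which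
is `h_{min (v, w)}` by monotonicity in `v`. By Lebesgue's differentiation theorem, almost everywhere
equality of `h_v` and `g_v` is the same as equality of their primitives `C(v, ·)` and `D(v, ·)`.
-/

section AEEquality

variable {α : Type*} {_ : MeasurableSpace α} {μ : Measure α}

lemma ae_le_of_integral_min_eq_left {f g : α → ℝ} (hf : Integrable f μ) (hg : Integrable g μ)
    (hfg : ∫ t, min (f t) (g t) ∂μ = ∫ t, f t ∂μ) : f ≤ᵐ[μ] g := by
  have hmin : (fun t => min (f t) (g t)) =ᵐ[μ] f :=
    (integral_eq_iff_of_ae_le (hf.inf hg) hf (ae_of_all _ fun _ => min_le_left _ _)).mp hfg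
  exact hmin.mono fun _ => min_eq_left_iff.mp

lemma ae_eq_of_integral_min_eq {f g : α → ℝ} (hf : Integrable f μ) (hg : Integrable g μ)
    (hf_min : ∫ t, min (f t) (g t) ∂μ = ∫ t, f t ∂μ)
    (hg_min : ∫ t, min (f t) (g t) ∂μ = ∫ t, g t ∂μ) : f =ᵐ[μ] g := by
  simp only [min_comm (f _)] at hg_min
  exact (ae_le_of_integral_min_eq_left hf hg hf_min).antisymm
    (ae_le_of_integral_min_eq_left hg hf hg_min)

lemma min_ae_eq_of_ae_monotone {ι : Type*} [LinearOrder ι] {s : Set ι} {h : ι → α → ℝ}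
    (h_mono : ∀ v ∈ s, ∀ w ∈ s, v ≤ w → h v ≤ᵐ[μ] h w) {v w : ι} (hv : v ∈ s) (hw : w ∈ s) :
    (fun t => min (h v t) (h w t)) =ᵐ[μ] h (min v w) := by
  rcases le_total v w with hvw | hwv
  · rw [min_eq_left hvw]
    exact (h_mono v hv w hw hvw).mono fun _ => min_eq_left
  · rw [min_eq_right hwv]
    exact (h_mono w hw v hv hwv).mono fun _ => min_eq_right

theorem forall_integral_min_eq_iff_forall_ae_eq {ι : Type*} [LinearOrder ι] {s : Set ι}
    {h g : ι → α → ℝ} {m : ι → ℝ}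
    (hh : ∀ v ∈ s, Integrable (h v) μ) (hg : ∀ v ∈ s, Integrable (g v) μ)
    (h_mono : ∀ v ∈ s, ∀ w ∈ s, v ≤ w → h v ≤ᵐ[μ] h w)
    (hh_int : ∀ v ∈ s, ∫ t, h v t ∂μ = m v) (hg_int : ∀ v ∈ s, ∫ t, g v t ∂μ = m v) :
    (∀ v ∈ s, ∀ w ∈ s, ∫ t, min (h v t) (g w t) ∂μ = m (min v w)) ↔
      ∀ v ∈ s, h v =ᵐ[μ] g v := by
  constructor
  · intro h_min v hv
    have h_diag : ∫ t, min (h v t) (g v t) ∂μ = m v := by rw [h_min v hv v hv, min_self]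
    exact ae_eq_of_integral_min_eq (hh v hv) (hg v hv) (h_diag.trans (hh_int v hv).symm)
      (h_diag.trans (hg_int v hv).symm)
  · intro h_ae v hv w hw
    have hvw : min v w ∈ s := min_rec' (· ∈ s) hv hw
    calc ∫ t, min (h v t) (g w t) ∂μ
        = ∫ t, min (h v t) (h w t) ∂μ :=
          integral_congr_ae ((h_ae w hw).symm.mono fun t ht => congrArg (min (h v t)) ht)
      _ = ∫ t, h (min v w) t ∂μ := integral_congr_ae (min_ae_eq_of_ae_monotone h_mono hv hw)
      _ = m (min v w) := hh_int _ hvw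

end AEEquality

section Primitive

variable {a b : ℝ}

theorem ae_eq_restrict_Ioc_iff_forall_intervalIntegral_eq {E : Type*} [NormedAddCommGroup E]
    [NormedSpace ℝ E] [CompleteSpace E] {f g : ℝ → E}
    (hf : IntervalIntegrable f volume a b) (hg : IntervalIntegrable g volume a b) :
    f =ᵐ[volume.restrict (Ioc a b)] g ↔
      ∀ u ∈ Icc a b, ∫ t in a..u, f t = ∫ t in a..u, g t := by
  constructor
  · intro hfg u hu
    refine intervalIntegral.integral_congr_ae_restrict (ae_restrict_of_ae_restrict_of_subset ?_ hfg)
    rw [uIoc_of_le hu.1]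
    exact Ioc_subset_Ioc_right hu.2
  · intro hfg
    rw [← Measure.restrict_congr_set (Ioo_ae_eq_Ioc (μ := volume))]
    refine (ae_restrict_iff' measurableSet_Ioo).mpr ?_
    filter_upwards [hf.ae_hasDerivAt_integral, hg.ae_hasDerivAt_integral] with x hfx hgx hx
    have hx_mem : x ∈ uIcc a b := Icc_subset_uIcc (Ioo_subset_Icc_self hx)
    have h_primitive : (fun u => ∫ t in a..u, f t) =ᶠ[nhds x] fun u => ∫ t in a..u, g t :=
      Filter.eventually_of_mem (Icc_mem_nhds hx.1 hx.2) hfg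
    exact (hfx hx_mem a left_mem_uIcc).unique
      ((hgx hx_mem a left_mem_uIcc).congr_of_eventuallyEq h_primitive)

theorem upperProduct_eq_M_iff_eq_general {ι : Type*} [LinearOrder ι] {s : Set ι} {m : ι → ℝ}
    {C D h g : ι → ℝ → ℝ} (hab : a ≤ b)
    (hh : ∀ v ∈ s, IntervalIntegrable (h v) volume a b)
    (hg : ∀ v ∈ s, IntervalIntegrable (g v) volume a b)
    (hC : ∀ v ∈ s, ∀ u ∈ Icc a b, C v u = ∫ t in a..u, h v t)
    (hD : ∀ v ∈ s, ∀ u ∈ Icc a b, D v u = ∫ t in a..u, g v t)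
    (h_mono : ∀ v ∈ s, ∀ w ∈ s, v ≤ w → h v ≤ᵐ[volume.restrict (Ioc a b)] h w)
    (hC_right : ∀ v ∈ s, C v b = m v) (hD_right : ∀ v ∈ s, D v b = m v) :
    (∀ v ∈ s, ∀ w ∈ s, ∫ t in a..b, min (h v t) (g w t) = m (min v w)) ↔
      ∀ v ∈ s, ∀ u ∈ Icc a b, C v u = D v u := by
  have hb : b ∈ Icc a b := right_mem_Icc.mpr hab
  have hh_int : ∀ v ∈ s, ∫ t in Ioc a b, h v t = m v := fun v hv => by
    rw [← intervalIntegral.integral_of_le hab, ← hC v hv b hb, hC_right v hv]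
  have hg_int : ∀ v ∈ s, ∫ t in Ioc a b, g v t = m v := fun v hv => by
    rw [← intervalIntegral.integral_of_le hab, ← hD v hv b hb, hD_right v hv]
  simp only [intervalIntegral.integral_of_le hab]
  rw [forall_integral_min_eq_iff_forall_ae_eq (fun v hv => (hh v hv).1) (fun v hv => (hg v hv).1)
    h_mono hh_int hg_int]
  refine forall₂_congr fun v hv => ?_
  rw [ae_eq_restrict_Ioc_iff_forall_intervalIntegral_eq (hh v hv) (hg v hv)]
  exact forall₂_congr fun u hu => by rw [hC v hv u hu, hD v hv u hu]

end Primitive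

lemma IsCopula.apply_one_right {C : ℝ → ℝ → ℝ} (hC : IsCopula C) {v : ℝ}
    (hv : v ∈ Icc (0 : ℝ) 1) : C v 1 = v :=
  hC.2.2.2.1 v hv

namespace IsDerivFamily

variable {C h : ℝ → ℝ → ℝ}

lemma intervalIntegrable (hh : IsDerivFamily C h) {v : ℝ} (hv : v ∈ Icc (0 : ℝ) 1) :
    IntervalIntegrable (h v) volume 0 1 := by
  obtain ⟨h_meas, h_mem, -⟩ := hh
  rw [intervalIntegrable_iff_integrableOn_Ioc_of_le zero_le_one]
  refine Integrable.of_mem_Icc 0 1 (h_meas v hv).aemeasurable ?_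
  exact ae_restrict_of_forall_mem measurableSet_Ioc fun t ht =>
    h_mem v hv t (Ioc_subset_Icc_self ht)

lemma ae_le (hh : IsDerivFamily C h) {v w : ℝ} (hv : v ∈ Icc (0 : ℝ) 1) (hw : w ∈ Icc (0 : ℝ) 1)
    (hvw : v ≤ w) : h v ≤ᵐ[volume.restrict (Ioc 0 1)] h w := by
  obtain ⟨-, -, -, h_mono, -⟩ := hh
  exact ae_restrict_of_forall_mem measurableSet_Ioc fun t ht =>
    h_mono t (Ioc_subset_Icc_self ht) hv hw hvw

lemma eq_intervalIntegral (hh : IsDerivFamily C h) {v u : ℝ} (hv : v ∈ Icc (0 : ℝ) 1)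
    (hu : u ∈ Icc (0 : ℝ) 1) : C v u = ∫ t in (0 : ℝ)..u, h v t :=
  hh.2.2.1 v hv u hu

end IsDerivFamily

/-- For copulas `C, D` with derivative families `(h_v)`, `(g_w)`,
the upper product `C ∨ D` equals the comonotonicity copula `M(v,w) = min(v,w)`,
i.e. `∫₀¹ min(h_v(t), g_w(t)) dt = min(v,w)` for all `(v,w) ∈ [0,1]²`, if and only
if `C = D` on `[0,1]²`. -/
theorem upperProduct_eq_M_iff_eq (C D h g : ℝ → ℝ → ℝ)
    (hC : IsCopula C) (hD : IsCopula D)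
    (hh : IsDerivFamily C h) (hg : IsDerivFamily D g) :
    (∀ v ∈ Icc (0:ℝ) 1, ∀ w ∈ Icc (0:ℝ) 1,
        (∫ t in (0:ℝ)..1, min (h v t) (g w t)) = min v w)
      ↔ (∀ v ∈ Icc (0:ℝ) 1, ∀ u ∈ Icc (0:ℝ) 1, C v u = D v u) :=
  upperProduct_eq_M_iff_eq_general zero_le_one (fun _ => hh.intervalIntegrable)
    (fun _ => hg.intervalIntegrable) (fun _ hv _ => hh.eq_intervalIntegral hv)
    (fun _ hv _ => hg.eq_intervalIntegral hv) (fun _ hv _ => hh.ae_le hv)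
    (fun _ => hC.apply_one_right) (fun _ => hD.apply_one_right)

end
end

section
/- Let f, g : [0,1] → [0,1] be decreasing and right-continuous. Then ∫₀¹ |f(x) − g(x)| dx = ∫₀¹ |f⁻¹(y) − g⁻¹(y)| dy, where f⁻¹(w) := inf{t ∈ [0,1] : f(t) ≤ w} and g⁻¹(w) := inf{t ∈ [0,1] : g(t) ≤ w} (with inf ∅ = 1). -/
/-!
Both integrals are the area between the graphs of `f` and `g`, sliced vertically and horizontally:
the region is the symmetric difference of the two subgraphs, and at height `y` the slice
`{x ∈ [0, 1] | y < f x}` of a subgraph is `[0, f⁻¹ y)` up to the single point `f⁻¹ y`.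
-/

open MeasureTheory Set

noncomputable section

/-- Generalized inverse of a decreasing function `f : [0,1] → [0,1]`:
`f⁻¹(w) = inf {t ∈ [0,1] | f t ≤ w}`, with the convention `inf ∅ = 1`. -/
def geninv (f : ℝ → ℝ) (w : ℝ) : ℝ :=
  sInf (insert (1:ℝ) {t ∈ Icc (0:ℝ) 1 | f t ≤ w})

section SymmDiff

open scoped symmDiff

theorem volume_Iio_symmDiff_Iio (a b : ℝ) : volume (Iio a ∆ Iio b) = ‖a - b‖ₑ := by
  wlog hab : a ≤ b generalizing a b
  · rw [symmDiff_comm, this b a (le_of_not_ge hab), ← enorm_neg, neg_sub]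
  rw [symmDiff_of_le (Iio_subset_Iio hab), Iio_sdiff_Iio, Real.volume_Ico,
    Real.enorm_eq_ofReal_abs, abs_sub_comm, abs_of_nonneg (sub_nonneg.2 hab)]

theorem lintegral_enorm_sub_eq_lintegral_measure_symmDiff {α : Type*} [MeasurableSpace α]
    {μ : Measure α} [SFinite μ] {f g : α → ℝ} (hf : AEMeasurable f μ) (hg : AEMeasurable g μ) :
    ∫⁻ x, ‖f x - g x‖ₑ ∂μ = ∫⁻ y, μ ({x | y < f x} ∆ {x | y < g x}) := by
  let s : Set (α × ℝ) := {p | p.2 < f p.1} ∆ {p | p.2 < g p.1}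
  have hs : NullMeasurableSet s (μ.prod volume) :=
    (nullMeasurableSet_lt measurable_snd.aemeasurable hf.comp_fst).symmDiff
      (nullMeasurableSet_lt measurable_snd.aemeasurable hg.comp_fst)
  have hs_fiber (y : ℝ) : NullMeasurableSet ({x | y < f x} ∆ {x | y < g x}) μ :=
    (nullMeasurableSet_lt aemeasurable_const hf).symmDiff
      (nullMeasurableSet_lt aemeasurable_const hg)
  calc ∫⁻ x, ‖f x - g x‖ₑ ∂μ
      = ∫⁻ x, (∫⁻ y, s.indicator 1 (x, y)) ∂μ := lintegral_congr fun x => by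
        rw [← volume_Iio_symmDiff_Iio]
        exact (lintegral_indicator_one (measurableSet_Iio.symmDiff measurableSet_Iio)).symm
    _ = ∫⁻ y, (∫⁻ x, s.indicator 1 (x, y) ∂μ) :=
        lintegral_lintegral_swap (f := fun x y => s.indicator 1 (x, y))
          (aemeasurable_one.indicator₀ hs)
    _ = ∫⁻ y, μ ({x | y < f x} ∆ {x | y < g x}) :=
        lintegral_congr fun y => lintegral_indicator_one₀ (hs_fiber y)

end SymmDiff

section Geninv

open scoped symmDiff

variable {f g : ℝ → ℝ} {x y a b : ℝ}

theorem bddBelow_insert_one_sublevel (f : ℝ → ℝ) (y : ℝ) :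
    BddBelow (insert 1 {t ∈ Icc (0 : ℝ) 1 | f t ≤ y}) :=
  (bddBelow_Icc.mono (sep_subset _ _)).insert 1

theorem geninv_le_one (f : ℝ → ℝ) (y : ℝ) : geninv f y ≤ 1 :=
  csInf_le (bddBelow_insert_one_sublevel f y) (mem_insert _ _)

theorem geninv_nonneg (f : ℝ → ℝ) (y : ℝ) : 0 ≤ geninv f y :=
  le_csInf (insert_nonempty _ _) <| forall_mem_insert.2 ⟨zero_le_one, fun _ ht => ht.1.1⟩

theorem geninv_le (hx : x ∈ Icc (0 : ℝ) 1) (hfx : f x ≤ y) : geninv f y ≤ x :=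
  csInf_le (bddBelow_insert_one_sublevel f y) (mem_insert_of_mem _ ⟨hx, hfx⟩)

theorem le_of_geninv_lt (hf : AntitoneOn f (Icc 0 1)) (hx : x ∈ Icc (0 : ℝ) 1)
    (h : geninv f y < x) : f x ≤ y := by
  obtain ⟨t, rfl | ⟨ht, hty⟩, htx⟩ := exists_lt_of_csInf_lt (insert_nonempty _ _) h
  · exact absurd hx.2 htx.not_ge
  · exact (hf ht hx htx.le).trans hty

theorem antitone_geninv (f : ℝ → ℝ) : Antitone (geninv f) := fun _ y hy =>
  csInf_le_csInf (bddBelow_insert_one_sublevel f y) (insert_nonempty _ _) <|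
    insert_subset_insert fun _ ht => ⟨ht.1, ht.2.trans hy⟩

theorem geninv_eq_zero (h : f 0 ≤ y) : geninv f y = 0 :=
  (geninv_le (left_mem_Icc.2 zero_le_one) h).antisymm (geninv_nonneg f y)

theorem geninv_eq_one (h : ∀ t ∈ Icc (0 : ℝ) 1, y < f t) : geninv f y = 1 :=
  (geninv_le_one f y).antisymm <| le_csInf (insert_nonempty _ _) <|
    forall_mem_insert.2 ⟨le_rfl, fun t ht => absurd ht.2 (h t ht.1).not_ge⟩

theorem geninv_eq_geninv_of_notMem_Icc (hf : MapsTo f (Icc 0 1) (Icc a b))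
    (hg : MapsTo g (Icc 0 1) (Icc a b)) (hy : y ∉ Icc a b) : geninv f y = geninv g y := by
  have h0 : (0 : ℝ) ∈ Icc (0 : ℝ) 1 := left_mem_Icc.2 zero_le_one
  rcases lt_or_ge y a with hya | hay
  · rw [geninv_eq_one fun t ht => hya.trans_le (hf ht).1,
      geninv_eq_one fun t ht => hya.trans_le (hg ht).1]
  · have hby : b ≤ y := (not_le.1 fun hyb => hy ⟨hay, hyb⟩).le
    rw [geninv_eq_zero ((hf h0).2.trans hby), geninv_eq_zero ((hg h0).2.trans hby)]

theorem superlevel_ae_eq_Iio_geninv (hf : AntitoneOn f (Icc 0 1)) (y : ℝ) :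
    {x | y < f x} =ᵐ[volume.restrict (Icc 0 1)] Iio (geninv f y) := by
  filter_upwards [ae_restrict_mem measurableSet_Icc, Measure.ae_ne _ (geninv f y)] with x hx hne
  refine propext ⟨fun h => ?_, fun h => ?_⟩
  · exact (le_of_not_gt fun hlt => h.not_ge (le_of_geninv_lt hf hx hlt)).lt_of_ne hne
  · exact lt_of_not_ge fun hle => h.not_ge (geninv_le hx hle)

theorem volume_restrict_superlevel_symmDiff_superlevel (hf : AntitoneOn f (Icc 0 1))
    (hg : AntitoneOn g (Icc 0 1)) (y : ℝ) :
    volume.restrict (Icc 0 1) ({x | y < f x} ∆ {x | y < g x}) = ‖geninv f y - geninv g y‖ₑ := by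
  have hsub : Iio (geninv f y) ∆ Iio (geninv g y) ⊆ Icc 0 1 := by
    rintro x (⟨hx, hx'⟩ | ⟨hx, hx'⟩) <;>
      exact ⟨(geninv_nonneg _ y).trans (not_lt.1 hx'), hx.le.trans (geninv_le_one _ y)⟩
  calc volume.restrict (Icc 0 1) ({x | y < f x} ∆ {x | y < g x})
      = volume.restrict (Icc 0 1) (Iio (geninv f y) ∆ Iio (geninv g y)) :=
        measure_congr <|
          (superlevel_ae_eq_Iio_geninv hf y).symmDiff (superlevel_ae_eq_Iio_geninv hg y)
    _ = ‖geninv f y - geninv g y‖ₑ := by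
        rw [Measure.restrict_eq_self _ hsub, volume_Iio_symmDiff_Iio]

theorem setIntegral_abs_sub_eq_integral_abs_sub_geninv (hf : AntitoneOn f (Icc 0 1))
    (hg : AntitoneOn g (Icc 0 1)) :
    ∫ x in Icc 0 1, |f x - g x| = ∫ y, |geninv f y - geninv g y| := by
  have hfm : AEMeasurable f (volume.restrict (Icc 0 1)) :=
    aemeasurable_restrict_of_antitoneOn measurableSet_Icc hf
  have hgm : AEMeasurable g (volume.restrict (Icc 0 1)) :=
    aemeasurable_restrict_of_antitoneOn measurableSet_Icc hg
  have hinv : Measurable fun y => geninv f y - geninv g y :=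
    (antitone_geninv f).measurable.sub (antitone_geninv g).measurable
  simp only [← Real.norm_eq_abs]
  rw [integral_norm_eq_lintegral_enorm (hfm.fun_sub hgm).aestronglyMeasurable,
    integral_norm_eq_lintegral_enorm hinv.aestronglyMeasurable,
    lintegral_enorm_sub_eq_lintegral_measure_symmDiff hfm hgm]
  simp only [volume_restrict_superlevel_symmDiff_superlevel hf hg]

end Geninv

theorem integral_abs_sub_eq_integral_abs_sub_geninv_general {f g : ℝ → ℝ} {a b : ℝ}
    (frange : MapsTo f (Icc 0 1) (Icc a b)) (grange : MapsTo g (Icc 0 1) (Icc a b))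
    (fdec : AntitoneOn f (Icc 0 1)) (gdec : AntitoneOn g (Icc 0 1)) :
    ∫ x in (0 : ℝ)..1, |f x - g x| = ∫ y in a..b, |geninv f y - geninv g y| := by
  have hab : a ≤ b := nonempty_Icc.1 ⟨f 0, frange (left_mem_Icc.2 zero_le_one)⟩
  rw [intervalIntegral.integral_of_le zero_le_one, intervalIntegral.integral_of_le hab,
    ← integral_Icc_eq_integral_Ioc, ← integral_Icc_eq_integral_Ioc,
    setIntegral_abs_sub_eq_integral_abs_sub_geninv fdec gdec]
  refine (setIntegral_eq_integral_of_forall_compl_eq_zero fun y hy => ?_).symm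
  rw [geninv_eq_geninv_of_notMem_Icc frange grange hy, sub_self, abs_zero]

/-- For decreasing, right-continuous `f, g : [0,1] → [0,1]`,
`∫₀¹ |f(x) − g(x)| dx = ∫₀¹ |f⁻¹(y) − g⁻¹(y)| dy`, where `f⁻¹, g⁻¹` are the
generalized inverses (with `inf ∅ = 1`). -/
theorem integral_abs_sub_eq_integral_abs_sub_geninv (f g : ℝ → ℝ)
    (frange : ∀ t ∈ Icc (0:ℝ) 1, f t ∈ Icc (0:ℝ) 1)
    (grange : ∀ t ∈ Icc (0:ℝ) 1, g t ∈ Icc (0:ℝ) 1)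
    (fdec : AntitoneOn f (Icc (0:ℝ) 1))
    (gdec : AntitoneOn g (Icc (0:ℝ) 1))
    (frc : ∀ t ∈ Ico (0:ℝ) 1, ContinuousWithinAt f (Icc t 1) t)
    (grc : ∀ t ∈ Ico (0:ℝ) 1, ContinuousWithinAt g (Icc t 1) t) :
    (∫ x in (0:ℝ)..1, |f x - g x|) = ∫ y in (0:ℝ)..1, |geninv f y - geninv g y| :=
  integral_abs_sub_eq_integral_abs_sub_geninv_general frange grange fdec gdec

end
end

section
/- Let C be a stochastically increasing bivariate copula admitting a derivative family (f_v)_{v∈[0,1]} in which every f_v : [0,1] → [0,1] is decreasing and right-continuous. Then C is a fixed point of the upper product transform, i.e. ∫₀¹ min(f_v(t), u) dt = C(v,u) for all (v,u) ∈ [0,1]², if and only if for every v ∈ [0,1] one has f_v⁻¹(t) = f_v(t) for λ-almost every t ∈ [0,1], where f_v⁻¹(w) := inf{t ∈ [0,1] : f_v(t) ≤ w} (inf ∅ = 1). -/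
open MeasureTheory Set

noncomputable section

/-!
The number `geninv g w` is the length of the superlevel set `{t ∈ [0,1] | w < g t}` of a decreasing
function `g`. The layer-cake formula, truncated at height `u`, therefore says
`∫₀¹ min (g t) u dt = ∫₀ᵘ geninv g w dw`. Since `C v` is the primitive of `f v`, the fixed-point
equation compares the primitives of `geninv (f v)` and `f v`, and Lebesgue differentiation turns
equality of primitives into equality almost everywhere.
-/

section LayerCake

variable {α : Type*} [MeasurableSpace α] {μ : Measure α} {f : α → ℝ} {u : ℝ}

theorem integral_min_const_eq_integral_measureReal_lt (hf : Integrable f μ) (hf_nonneg : 0 ≤ᵐ[μ] f)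
    (hu : 0 ≤ u) : ∫ a, min (f a) u ∂μ = ∫ w in (0 : ℝ)..u, μ.real {a | w < f a} := by
  have min_nonneg : 0 ≤ᵐ[μ] fun a => min (f a) u := by
    filter_upwards [hf_nonneg] with a ha using le_min ha hu
  have min_integrable : Integrable (fun a => min (f a) u) μ := by
    refine hf.mono (hf.aestronglyMeasurable.inf aestronglyMeasurable_const) ?_
    filter_upwards [hf_nonneg, min_nonneg] with a ha hmin
    rw [Real.norm_of_nonneg hmin, Real.norm_of_nonneg ha]
    exact min_le_left _ _
  have measure_above_eq_zero : ∀ w ∈ Ioi (0 : ℝ) \ Ioc 0 u, μ.real {a | w < min (f a) u} = 0 := by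
    rintro w ⟨hw, hwu⟩
    have : u ≤ w := le_of_not_ge fun h => hwu ⟨hw, h⟩
    simp [this.not_gt]
  rw [min_integrable.integral_eq_integral_meas_lt min_nonneg,
    setIntegral_eq_of_subset_of_forall_sdiff_eq_zero measurableSet_Ioi Ioc_subset_Ioi_self
      measure_above_eq_zero,
    intervalIntegral.integral_of_le hu, integral_Ioc_eq_integral_Ioo, integral_Ioc_eq_integral_Ioo]
  refine setIntegral_congr_fun measurableSet_Ioo fun w hw => ?_
  simp only [lt_min_iff, hw.2, and_true]

end LayerCake

section Primitive

variable {E : Type*} [NormedAddCommGroup E] [NormedSpace ℝ E] {f g : ℝ → E} {a b : ℝ}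

theorem forall_intervalIntegral_eq_iff_ae_eq [CompleteSpace E]
    (hf : IntervalIntegrable f volume a b) (hg : IntervalIntegrable g volume a b) :
    (∀ u ∈ Icc a b, ∫ t in a..u, f t = ∫ t in a..u, g t) ↔
      ∀ᵐ t ∂volume.restrict (Icc a b), f t = g t := by
  constructor
  · intro h
    rw [← restrict_Ioo_eq_restrict_Icc, ae_restrict_iff' measurableSet_Ioo]
    filter_upwards [hf.ae_hasDerivAt_integral, hg.ae_hasDerivAt_integral] with t hft hgt ht
    have mem : t ∈ uIcc a b := Icc_subset_uIcc (Ioo_subset_Icc_self ht)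
    refine (hft mem a left_mem_uIcc).unique ((hgt mem a left_mem_uIcc).congr_of_eventuallyEq ?_)
    filter_upwards [Icc_mem_nhds ht.1 ht.2] with u hu using h u hu
  · intro h u hu
    rw [ae_restrict_iff' measurableSet_Icc] at h
    refine intervalIntegral.integral_congr_ae ?_
    filter_upwards [h] with t hfg ht
    rw [uIoc_of_le hu.1] at ht
    exact hfg ⟨ht.1.le, ht.2.trans hu.2⟩

end Primitive

section Geninv

variable {g : ℝ → ℝ} {t u w : ℝ}

theorem zero_mem_lowerBounds_geninv (g : ℝ → ℝ) (w : ℝ) :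
    0 ∈ lowerBounds (insert (1 : ℝ) {t ∈ Icc (0 : ℝ) 1 | g t ≤ w}) := by
  rintro t (rfl | ht)
  exacts [zero_le_one, ht.1.1]

theorem geninv_nonneg_s14 (g : ℝ → ℝ) (w : ℝ) : 0 ≤ geninv g w :=
  le_csInf (insert_nonempty _ _) (zero_mem_lowerBounds_geninv g w)

theorem geninv_le_one_s14 (g : ℝ → ℝ) (w : ℝ) : geninv g w ≤ 1 :=
  csInf_le ⟨0, zero_mem_lowerBounds_geninv g w⟩ (mem_insert _ _)

theorem geninv_le_s14 (ht : t ∈ Icc (0 : ℝ) 1) (h : g t ≤ w) : geninv g w ≤ t :=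
  csInf_le ⟨0, zero_mem_lowerBounds_geninv g w⟩ (mem_insert_of_mem _ ⟨ht, h⟩)

theorem le_geninv (hg : AntitoneOn g (Icc 0 1)) (ht : t ∈ Icc (0 : ℝ) 1) (h : w < g t) :
    t ≤ geninv g w := by
  refine le_csInf (insert_nonempty _ _) ?_
  rintro s (rfl | ⟨hs, hsw⟩)
  · exact ht.2
  · exact (hg.reflect_lt hs ht (hsw.trans_lt h)).le

theorem geninv_antitone (g : ℝ → ℝ) : Antitone (geninv g) := fun _ _ hw =>
  csInf_le_csInf ⟨0, zero_mem_lowerBounds_geninv g _⟩ (insert_nonempty _ _)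
    (insert_subset_insert fun _ ht => ⟨ht.1, ht.2.trans hw⟩)

theorem measureReal_lt_eq_geninv (hg : AntitoneOn g (Icc 0 1)) (w : ℝ) :
    (volume.restrict (Ioc (0 : ℝ) 1)).real {t | w < g t} = geninv g w := by
  rw [measureReal_restrict_apply' measurableSet_Ioc]
  apply le_antisymm
  · calc volume.real ({t | w < g t} ∩ Ioc 0 1) ≤ volume.real (Ioc 0 (geninv g w)) :=
          measureReal_mono (fun t ht => ⟨ht.2.1, le_geninv hg (Ioc_subset_Icc_self ht.2) ht.1⟩)
            measure_Ioc_lt_top.ne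
      _ = geninv g w := by rw [Real.volume_real_Ioc_of_le (geninv_nonneg_s14 g w), sub_zero]
  · have subset : Ioo 0 (geninv g w) ⊆ {t | w < g t} ∩ Ioc 0 1 := fun t ht =>
      have mem : t ∈ Ioc (0 : ℝ) 1 := ⟨ht.1, ht.2.le.trans (geninv_le_one_s14 g w)⟩
      ⟨lt_of_not_ge fun h => ht.2.not_ge (geninv_le_s14 (Ioc_subset_Icc_self mem) h), mem⟩
    calc geninv g w = volume.real (Ioo 0 (geninv g w)) := by
          rw [Real.volume_real_Ioo_of_le (geninv_nonneg_s14 g w), sub_zero]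
      _ ≤ volume.real ({t | w < g t} ∩ Ioc 0 1) :=
          measureReal_mono subset (measure_inter_lt_top_of_right_ne_top measure_Ioc_lt_top.ne).ne

theorem integral_min_const_eq_integral_geninv (hg : AntitoneOn g (Icc 0 1))
    (hg_nonneg : ∀ t ∈ Icc (0 : ℝ) 1, 0 ≤ g t) (hu : 0 ≤ u) :
    ∫ t in (0 : ℝ)..1, min (g t) u = ∫ w in (0 : ℝ)..u, geninv g w := by
  have integrable : IntegrableOn g (Ioc 0 1) :=
    (hg.integrableOn_isCompact isCompact_Icc).mono_set Ioc_subset_Icc_self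
  have nonneg : 0 ≤ᵐ[volume.restrict (Ioc 0 1)] g :=
    ae_restrict_of_forall_mem measurableSet_Ioc fun t ht => hg_nonneg t (Ioc_subset_Icc_self ht)
  rw [intervalIntegral.integral_of_le zero_le_one,
    integral_min_const_eq_integral_measureReal_lt integrable nonneg hu]
  simp only [measureReal_lt_eq_geninv hg]

end Geninv

theorem fixedPoint_iff_involution_general {c g : ℝ → ℝ} (hg : AntitoneOn g (Icc 0 1))
    (hg_nonneg : ∀ t ∈ Icc (0 : ℝ) 1, 0 ≤ g t)
    (hc : ∀ u ∈ Icc (0 : ℝ) 1, c u = ∫ t in (0 : ℝ)..u, g t) :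
    (∀ u ∈ Icc (0 : ℝ) 1, ∫ t in (0 : ℝ)..1, min (g t) u = c u) ↔
      ∀ᵐ t ∂volume.restrict (Icc (0 : ℝ) 1), geninv g t = g t := by
  have integrable : IntervalIntegrable g volume 0 1 :=
    AntitoneOn.intervalIntegrable (by rwa [uIcc_of_le zero_le_one])
  rw [← forall_intervalIntegral_eq_iff_ae_eq (geninv_antitone g).intervalIntegrable integrable]
  refine forall₂_congr fun u hu => ?_
  rw [integral_min_const_eq_integral_geninv hg hg_nonneg hu.1, hc u hu]

/-- Let `C` be a stochastically increasing copula with a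
derivative family `(f_v)` of decreasing, right-continuous functions. Then `C` is
a fixed point of the upper product transform, `∫₀¹ min(f_v(t), u) dt = C(v,u)`
for all `(v,u) ∈ [0,1]²`, if and only if for every `v ∈ [0,1]` one has
`f_v⁻¹ = f_v` λ-a.e. on `[0,1]`. -/
theorem fixedPoint_iff_involution (C f : ℝ → ℝ → ℝ)
    (hC : IsCopula C)
    (hSI : ∀ v ∈ Icc (0:ℝ) 1, ConcaveOn ℝ (Icc (0:ℝ) 1) (fun u => C v u))
    (hf : IsDerivFamily C f)
    (fdec : ∀ v ∈ Icc (0:ℝ) 1, AntitoneOn (f v) (Icc (0:ℝ) 1))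
    (frc : ∀ v ∈ Icc (0:ℝ) 1, ∀ t ∈ Ico (0:ℝ) 1, ContinuousWithinAt (f v) (Icc t 1) t) :
    (∀ v ∈ Icc (0:ℝ) 1, ∀ u ∈ Icc (0:ℝ) 1,
        (∫ t in (0:ℝ)..1, min (f v t) u) = C v u)
      ↔ (∀ v ∈ Icc (0:ℝ) 1,
          ∀ᵐ t ∂(volume.restrict (Icc (0:ℝ) 1)), geninv (f v) t = f v t) := by
  obtain ⟨-, hf_mem, hf_int, -, -⟩ := hf
  exact forall₂_congr fun v hv =>
    fixedPoint_iff_involution_general (fdec v hv) (fun t ht => (hf_mem v hv t ht).1) (hf_int v hv)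

end
end

section
/- Let Φ be the cumulative distribution function of the standard Gaussian measure on ℝ, φ(s) = (2π)^{−1/2} exp(−s²/2) its density, and Φ⁻¹(p) := inf{x ∈ ℝ : Φ(x) ≥ p} for p ∈ (0,1). Let ρ ∈ (−1,1) with ρ ≠ 0 and set r := √(1−ρ²). Then for all u, v ∈ (0,1): ∫₀¹ min( Φ((Φ⁻¹(v) − ρ Φ⁻¹(t)) / √(1−ρ²)), u ) dt = ∫_{−∞}^{Φ⁻¹(u)} Φ((Φ⁻¹(v) − r·s)/|ρ|) φ(s) ds. That is, the upper product transform of the Gaussian copula with parameter ρ is the Gaussian copula with parameter √(1−ρ²): T(C_ρ^{Gauss}) = C_{√(1−ρ²)}^{Gauss}. -/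
open MeasureTheory Set

noncomputable section

/-- The standard normal cumulative distribution function `Φ`. -/
def stdNormalCDF (x : ℝ) : ℝ := ((ProbabilityTheory.gaussianReal 0 1) (Iic x)).toReal

/-- The standard normal density `φ(s) = (2π)^{-1/2} exp(−s²/2)`. -/
def stdNormalPDF (s : ℝ) : ℝ :=
  (Real.sqrt (2 * Real.pi))⁻¹ * Real.exp (-(s ^ 2) / 2)

/-- The standard normal quantile function `Φ⁻¹(p) = inf {x : Φ x ≥ p}`. -/
def stdNormalQuantile (p : ℝ) : ℝ := sInf {x : ℝ | p ≤ stdNormalCDF x}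

/-!
Let `X` and `S` be independent standard normal variables. The substitution `x = Φ⁻¹(t)` turns the
left-hand side into an expectation over `X`, and since `min (Φ y) (Φ b) = P(S ≤ y, S ≤ b)`, with
`b = Φ⁻¹(u)`, `a = Φ⁻¹(v)` and `σ = √(1 - ρ²)` it equals `P(ρ X + σ S ≤ a, S ≤ b)`. Conditioning on
`S` instead of `X` gives the right-hand side, with `|ρ|` in place of `ρ` because `X` is symmetric.
-/

section

open ProbabilityTheory Filter
open scoped Topology NNReal

section Fubini

variable {α β : Type*} [MeasurableSpace α] [MeasurableSpace β]
  (μ : Measure α) (ν : Measure β) [IsFiniteMeasure μ] [IsFiniteMeasure ν]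

lemma integral_measureReal_prodMk_left_eq_right {A : Set (α × β)} (hA : MeasurableSet A) :
    ∫ x, ν.real (Prod.mk x ⁻¹' A) ∂μ = ∫ y, μ.real ((fun x ↦ (x, y)) ⁻¹' A) ∂ν := by
  simp only [measureReal_def]
  rw [integral_toReal (measurable_measure_prodMk_left hA).aemeasurable
      (ae_of_all _ fun _ ↦ measure_lt_top _ _),
    integral_toReal (measurable_measure_prodMk_right hA).aemeasurable
      (ae_of_all _ fun _ ↦ measure_lt_top _ _),
    ← Measure.prod_apply hA, ← Measure.prod_apply_symm hA]

lemma integral_min_measureReal_Iic [TopologicalSpace β] [SecondCountableTopology β]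
    [LinearOrder β] [OrderClosedTopology β] [OpensMeasurableSpace β]
    {g : α → β} (hg : Measurable g) (b : β) :
    ∫ x, min (ν.real (Iic (g x))) (ν.real (Iic b)) ∂μ
      = ∫ s in Iic b, μ.real {x | s ≤ g x} ∂ν := by
  have min_eq (y : β) :
      min (ν.real (Iic y)) (ν.real (Iic b)) = (ν.restrict (Iic b)).real (Iic y) := by
    have real_Iic_mono : Monotone fun z ↦ ν.real (Iic z) :=
      fun _ _ h ↦ measureReal_mono (Iic_subset_Iic.2 h)
    rw [measureReal_restrict_apply measurableSet_Iic, Iic_inter_Iic]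
    exact (real_Iic_mono.map_min).symm
  simp only [min_eq]
  exact integral_measureReal_prodMk_left_eq_right μ (ν.restrict (Iic b))
    (measurableSet_le measurable_snd (hg.comp measurable_fst))

end Fubini

/-- The quantile function `p ↦ inf {x | p ≤ F x}` of a measure on `ℝ` with distribution function
`F`. It is meaningful for `p ∈ (0, 1)`; elsewhere the infimum may be the junk value `0`. -/
def quantile (μ : Measure ℝ) (p : ℝ) : ℝ := sInf {x | p ≤ cdf μ x}

section Quantile

variable (μ : Measure ℝ) {p : ℝ}

lemma le_cdf_quantile (hp : p < 1) : p ≤ cdf μ (quantile μ p) := by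
  have superlevel_nonempty : {x | p ≤ cdf μ x}.Nonempty :=
    ((tendsto_cdf_atTop μ).eventually_const_le hp).exists
  have le_right {y : ℝ} (hy : quantile μ p < y) : p ≤ cdf μ y := by
    obtain ⟨x, hx, hxy⟩ := exists_lt_of_csInf_lt superlevel_nonempty hy
    exact hx.trans (monotone_cdf μ hxy.le)
  have right_limit : Tendsto (cdf μ) (𝓝[>] quantile μ p) (𝓝 (cdf μ (quantile μ p))) :=
    ((cdf μ).right_continuous _).mono_left (nhdsWithin_mono _ Ioi_subset_Ici_self)
  exact ge_of_tendsto right_limit (eventually_nhdsWithin_of_forall fun _ ↦ le_right)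

lemma quantile_le_iff (hp : p ∈ Ioo 0 1) (x : ℝ) : quantile μ p ≤ x ↔ p ≤ cdf μ x := by
  refine ⟨fun h ↦ (le_cdf_quantile μ hp.2).trans (monotone_cdf μ h), fun h ↦ csInf_le ?_ h⟩
  obtain ⟨z, hz⟩ := ((tendsto_cdf_atBot μ).eventually_lt_const hp.1).exists
  exact ⟨z, fun y hy ↦ ((monotone_cdf μ).reflect_lt (hz.trans_le hy)).le⟩

lemma cdf_quantile [IsProbabilityMeasure μ] [NullSingletonClass μ] (hp : p ∈ Ioo 0 1) :
    cdf μ (quantile μ p) = p := by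
  refine le_antisymm ?_ (le_cdf_quantile μ hp.2)
  have cdf_le_of_lt : ∀ x < quantile μ p, cdf μ x ≤ p := fun x hx ↦
    (not_le.1 fun h ↦ hx.not_ge ((quantile_le_iff μ hp x).2 h)).le
  have no_jump : cdf μ (quantile μ p) ≤ Function.leftLim (cdf μ) (quantile μ p) := by
    rw [← sub_nonpos, ← ENNReal.ofReal_eq_zero, ← StieltjesFunction.measure_singleton,
      measure_cdf, measure_singleton]
  exact no_jump.trans <| le_of_tendsto ((monotone_cdf μ).tendsto_leftLim _)
    (eventually_nhdsWithin_of_forall cdf_le_of_lt)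

lemma monotoneOn_quantile : MonotoneOn (quantile μ) (Ioo 0 1) := fun _ hp _ hq hpq ↦
  (quantile_le_iff μ hp _).2 (hpq.trans (le_cdf_quantile μ hq.2))

lemma aemeasurable_quantile : AEMeasurable (quantile μ) (volume.restrict (Ioo 0 1)) :=
  aemeasurable_restrict_of_monotoneOn measurableSet_Ioo (monotoneOn_quantile μ)

lemma map_quantile_volume [IsProbabilityMeasure μ] :
    (volume.restrict (Ioo 0 1)).map (quantile μ) = μ := by
  refine Measure.ext_of_Iic _ _ fun x ↦ ?_
  have preimage_inter : quantile μ ⁻¹' Iic x ∩ Ioo 0 1 = Iic (cdf μ x) ∩ Ioo 0 1 := by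
    ext p
    exact and_congr_left fun hp ↦ quantile_le_iff μ hp x
  have Iic_inter : Iic (cdf μ x) ∩ Ioc 0 1 = Ioc 0 (cdf μ x) := by
    rw [inter_comm, Ioc_inter_Iic, min_eq_right (cdf_le_one μ x)]
  rw [Measure.map_apply_of_aemeasurable (aemeasurable_quantile μ) measurableSet_Iic,
    Measure.restrict_apply' measurableSet_Ioo, preimage_inter,
    ← Measure.restrict_apply' measurableSet_Ioo, Measure.restrict_congr_set Ioo_ae_eq_Ioc,
    Measure.restrict_apply' measurableSet_Ioc, Iic_inter, Real.volume_Ioc, sub_zero, ofReal_cdf]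

lemma integral_comp_quantile [IsProbabilityMeasure μ] {E : Type*} [NormedAddCommGroup E]
    [NormedSpace ℝ E] {f : ℝ → E} (hf : AEStronglyMeasurable f μ) :
    ∫ t in (0 : ℝ)..1, f (quantile μ t) = ∫ x, f x ∂μ := by
  rw [intervalIntegral.integral_of_le zero_le_one, integral_Ioc_eq_integral_Ioo,
    ← integral_map (aemeasurable_quantile μ) (by rwa [map_quantile_volume]), map_quantile_volume]

end Quantile

lemma measureReal_mul_le_eq_cdf (μ : Measure ℝ) [IsProbabilityMeasure μ] [μ.IsNegInvariant]
    {ρ : ℝ} (hρ : ρ ≠ 0) (c : ℝ) : μ.real {x | ρ * x ≤ c} = cdf μ (c / |ρ|) := by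
  have abs_mul_le : {x | |ρ| * x ≤ c} = Iic (c / |ρ|) := by
    ext x
    rw [mem_ofPred_eq, mem_Iic, le_div_iff₀' (abs_pos.2 hρ)]
  rw [cdf_eq_real, ← abs_mul_le]
  rcases abs_choice ρ with h | h
  · rw [h]
  · rw [h, measureReal_def, ← Measure.measure_preimage_neg, measureReal_def]
    simp only [preimage_ofPred_eq, mul_neg, neg_mul]

lemma integral_min_cdf_affine (μ ν : Measure ℝ) [IsProbabilityMeasure μ] [μ.IsNegInvariant]
    [IsProbabilityMeasure ν] {ρ σ : ℝ} (hρ : ρ ≠ 0) (hσ : 0 < σ) (a b : ℝ) :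
    ∫ x, min (cdf ν ((a - ρ * x) / σ)) (cdf ν b) ∂μ
      = ∫ s in Iic b, cdf μ ((a - σ * s) / |ρ|) ∂ν := by
  have le_affine_iff (s x : ℝ) : s ≤ (a - ρ * x) / σ ↔ ρ * x ≤ a - σ * s := by
    rw [le_div_iff₀' hσ, le_sub_comm]
  have g_measurable : Measurable fun x ↦ (a - ρ * x) / σ := by fun_prop
  simpa only [← cdf_eq_real, le_affine_iff, measureReal_mul_le_eq_cdf μ hρ]
    using integral_min_measureReal_Iic μ ν g_measurable b

theorem upperProductTransform_gaussian_general (μ ν : Measure ℝ) [IsProbabilityMeasure μ]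
    [μ.IsNegInvariant] [IsProbabilityMeasure ν] [NullSingletonClass ν] {ρ σ : ℝ} (hρ : ρ ≠ 0)
    (hσ : 0 < σ) (a : ℝ) {u : ℝ} (hu : u ∈ Ioo 0 1) :
    ∫ t in (0 : ℝ)..1, min (cdf ν ((a - ρ * quantile μ t) / σ)) u
      = ∫ s in Iic (quantile ν u), cdf μ ((a - σ * s) / |ρ|) ∂ν := by
  have integrand_measurable : Measurable fun x ↦ min (cdf ν ((a - ρ * x) / σ)) u := by
    have := (monotone_cdf ν).measurable
    fun_prop
  rw [integral_comp_quantile μ integrand_measurable.aestronglyMeasurable,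
    ← integral_min_cdf_affine μ ν hρ hσ, cdf_quantile ν hu]

section Gaussian

instance isNegInvariant_gaussianReal_zero (v : ℝ≥0) : (gaussianReal 0 v).IsNegInvariant :=
  ⟨by rw [Measure.neg_def]; exact gaussianReal_map_neg.trans (by rw [neg_zero])⟩

lemma setIntegral_gaussianReal_eq_setIntegral_smul {E : Type*} [NormedAddCommGroup E]
    [NormedSpace ℝ E] (m : ℝ) {v : ℝ≥0} (hv : v ≠ 0) (f : ℝ → E) {A : Set ℝ}
    (hA : MeasurableSet A) :
    ∫ x in A, f x ∂gaussianReal m v = ∫ x in A, gaussianPDFReal m v x • f x := by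
  rw [gaussianReal_of_var_ne_zero m hv, setIntegral_withDensity_eq_setIntegral_toReal_smul
    (measurable_gaussianPDF m v) (ae_of_all _ fun _ ↦ gaussianPDF_lt_top) f hA]
  simp only [toReal_gaussianPDF]

lemma stdNormalPDF_eq_gaussianPDFReal : stdNormalPDF = gaussianPDFReal 0 1 := by
  ext s
  simp [stdNormalPDF, gaussianPDFReal]

lemma stdNormalCDF_eq_cdf : stdNormalCDF = cdf (gaussianReal 0 1) := by
  ext x
  rw [cdf_eq_real, stdNormalCDF, measureReal_def]

lemma stdNormalQuantile_eq_quantile : stdNormalQuantile = quantile (gaussianReal 0 1) := by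
  ext p
  rw [stdNormalQuantile, quantile, stdNormalCDF_eq_cdf]

end Gaussian

end

/-- For `ρ ∈ (−1,1)`, `ρ ≠ 0`, and `r = √(1−ρ²)`, the upper
product transform of the Gaussian copula with parameter `ρ` is the Gaussian
copula with parameter `√(1−ρ²)`: for all `u, v ∈ (0,1)`,
`∫₀¹ min(Φ((Φ⁻¹(v) − ρΦ⁻¹(t))/√(1−ρ²)), u) dt
  = ∫_{−∞}^{Φ⁻¹(u)} Φ((Φ⁻¹(v) − r·s)/|ρ|) φ(s) ds`,
i.e. `T(C_ρ^Gauss) = C_{√(1−ρ²)}^Gauss`. -/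
theorem upperProductTransform_gaussian (ρ : ℝ) (hρ : ρ ∈ Ioo (-1:ℝ) 1) (hρ0 : ρ ≠ 0) :
    ∀ u ∈ Ioo (0:ℝ) 1, ∀ v ∈ Ioo (0:ℝ) 1,
      (∫ t in (0:ℝ)..1,
          min (stdNormalCDF ((stdNormalQuantile v - ρ * stdNormalQuantile t) /
                Real.sqrt (1 - ρ ^ 2))) u)
        = ∫ s in Iic (stdNormalQuantile u),
            stdNormalCDF ((stdNormalQuantile v - Real.sqrt (1 - ρ ^ 2) * s) / |ρ|)
              * stdNormalPDF s := by
  intro u hu v _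
  have : NullSingletonClass (ProbabilityTheory.gaussianReal 0 1) :=
    ProbabilityTheory.nullSingletonClass_gaussianReal one_ne_zero
  have hσ : 0 < √(1 - ρ ^ 2) :=
    Real.sqrt_pos.2 (sub_pos.2 ((sq_lt_one_iff_abs_lt_one ρ).2 (abs_lt.2 hρ)))
  simp only [stdNormalCDF_eq_cdf, stdNormalQuantile_eq_quantile, stdNormalPDF_eq_gaussianPDFReal]
  rw [upperProductTransform_gaussian_general _ _ hρ0 hσ _ hu,
    setIntegral_gaussianReal_eq_setIntegral_smul 0 one_ne_zero _ measurableSet_Iic]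
  simp only [smul_eq_mul, mul_comm]

end
end
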